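/- For every real δ with 0 ≤ δ < √2 − 1 there exists a constant C₀ > 0, depending only on δ, with the following property: for all natural numbers m, n, k with k ≥ 1, every real m×n matrix H satisfying the restricted isometry property of order 2k with constant δ, every s ∈ ℝ^n with y = H s, and every minimizer s* of the ℓ1-norm ‖x‖₁ over {x ∈ ℝ^n : H x = y}, one has ‖s* − s‖₁ ≤ C₀ ‖s − s_k‖₁, where s_k is the vector s with all but its k largest-magnitude entries set to zero. In particular, if s is k-sparse then s* = s. -/

import Mathlib

open Matrix

/-- The ℓ0-"norm": number of nonzero entries of a vector. -/
noncomputable def l0 {n : ℕ} (s : Fin n → ℝ) : ℕ := (Finset.univ.filter (fun i => s i ≠ 0)).card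

/-- The ℓ1-norm of a vector. -/
def l1 {n : ℕ} (s : Fin n → ℝ) : ℝ := ∑ i, |s i|

/-!
Let `h = s* - s`, which lies in the kernel of `H`, and let `T` be the support of `s_k`. Minimality
of `s*` puts `h` in the cone `‖h_{Tᶜ}‖₁ ≤ ‖h_T‖₁ + 2 ‖s_{Tᶜ}‖₁`, so it suffices to show
`‖h_T‖₁ ≤ ρ ‖h_{Tᶜ}‖₁` for some `ρ < 1`. Following Candès, let `B` carry the `k` largest entries of
`h` outside `T` and cut the remaining indices into blocks of size `k` by decreasing magnitude. The
RIP makes the images of disjointly supported sparse vectors almost orthogonal, and the `ℓ2`-norm of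
each block is at most `k^(-1/2)` times the `ℓ1`-norm of the preceding one; expanding
`0 = ⟪H h_{T ∪ B}, H h⟫` then gives `(1 - δ) √k ‖h_{T ∪ B}‖₂ ≤ √2 δ ‖h_{Tᶜ}‖₁`.
-/

section

open scoped Finset

section BlockDecomposition

variable {ι : Type*} {S T : Finset ι} {h : ι → ℝ} {k : ℕ} {M : ℝ}

/-- The `ℓ2`-norm `‖h_S‖₂` of the restriction of `h` to the coordinates in `S`. -/
noncomputable def l2On (S : Finset ι) (h : ι → ℝ) : ℝ := √(∑ i ∈ S, h i ^ 2)

lemma l2On_nonneg (S : Finset ι) (h : ι → ℝ) : 0 ≤ l2On S h := Real.sqrt_nonneg _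

lemma sq_l2On (S : Finset ι) (h : ι → ℝ) : l2On S h ^ 2 = ∑ i ∈ S, h i ^ 2 :=
  Real.sq_sqrt (Finset.sum_nonneg fun _ _ ↦ sq_nonneg _)

lemma l2On_mono (hST : S ⊆ T) : l2On S h ≤ l2On T h :=
  Real.sqrt_le_sqrt (Finset.sum_le_sum_of_subset_of_nonneg hST fun _ _ _ ↦ sq_nonneg _)

lemma l2On_add_l2On_le [DecidableEq ι] (hST : Disjoint S T) :
    l2On S h + l2On T h ≤ √2 * l2On (S ∪ T) h := by
  have pythagoras : l2On (S ∪ T) h ^ 2 = l2On S h ^ 2 + l2On T h ^ 2 := by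
    simp only [sq_l2On, Finset.sum_union hST]
  refine le_of_sq_le_sq ?_ (mul_nonneg (Real.sqrt_nonneg 2) (l2On_nonneg _ h))
  rw [mul_pow, Real.sq_sqrt zero_le_two, pythagoras]
  exact add_sq_le

lemma l2On_le_sqrt_mul (hS : #S ≤ k) (hM : 0 ≤ M) (hSM : ∀ i ∈ S, |h i| ≤ M) :
    l2On S h ≤ √k * M := by
  refine le_of_sq_le_sq ?_ (by positivity)
  calc l2On S h ^ 2 = ∑ i ∈ S, h i ^ 2 := sq_l2On S h
    _ ≤ #S • M ^ 2 := 
      Finset.sum_le_card_nsmul S _ _ fun i hi ↦ sq_le_sq.2 ((hSM i hi).trans (le_abs_self M))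
    _ ≤ (√k * M) ^ 2 := by
      rw [nsmul_eq_mul, mul_pow, Real.sq_sqrt k.cast_nonneg]
      gcongr

lemma sum_abs_le_sqrt_mul_l2On (hS : #S ≤ k) : ∑ i ∈ S, |h i| ≤ √k * l2On S h := by
  refine le_of_sq_le_sq ?_ (mul_nonneg (Real.sqrt_nonneg _) (l2On_nonneg S h))
  calc (∑ i ∈ S, |h i|) ^ 2 ≤ #S * ∑ i ∈ S, |h i| ^ 2 := sq_sum_le_card_mul_sum_sq
    _ ≤ k * ∑ i ∈ S, |h i| ^ 2 := by gcongr
    _ = (√k * l2On S h) ^ 2 := by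
      simp only [sq_abs, mul_pow, Real.sq_sqrt k.cast_nonneg, sq_l2On]

lemma exists_subset_card_eq_min_threshold [DecidableEq ι] {f : ι → ℝ} (hf : ∀ i, 0 ≤ f i)
    (S : Finset ι) (k : ℕ) :
    ∃ B ⊆ S, #B = min k #S ∧ ∃ M, 0 ≤ M ∧ k * M ≤ ∑ i ∈ B, f i ∧ ∀ i ∈ S \ B, f i ≤ M := by
  induction k with
  | zero =>
    refine ⟨∅, S.empty_subset, by simp, ∑ i ∈ S, f i, Finset.sum_nonneg fun i _ ↦ hf i, by simp,
      fun i hi ↦ ?_⟩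
    exact Finset.single_le_sum (fun i _ ↦ hf i) (Finset.sdiff_subset hi)
  | succ k ih =>
    obtain ⟨B, hBS, hcard, M, -, hMB, hM⟩ := ih
    obtain hrest | hrest := (S \ B).eq_empty_or_nonempty
    · have hBeq : B = S := hBS.antisymm (Finset.sdiff_eq_empty_iff_subset.1 hrest)
      refine ⟨B, hBS, ?_, 0, le_rfl, ?_, by simp [hrest]⟩
      · rw [hBeq] at hcard ⊢
        omega
      · simpa using Finset.sum_nonneg fun i _ ↦ hf i
    · obtain ⟨a, ha, hmax⟩ := Finset.exists_max_image (S \ B) f hrest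
      obtain ⟨haS, haB⟩ := Finset.mem_sdiff.1 ha
      refine ⟨insert a B, Finset.insert_subset haS hBS, ?_, f a, hf a, ?_, fun i hi ↦ hmax i ?_⟩
      · have := Finset.card_pos.2 hrest
        rw [Finset.card_sdiff_of_subset hBS] at this
        rw [Finset.card_insert_of_notMem haB]
        omega
      · calc ((k + 1 : ℕ) : ℝ) * f a = f a + k * f a := by push_cast; ring
          _ ≤ f a + k * M := by gcongr; exact hM a ha
          _ ≤ f a + ∑ i ∈ B, f i := by gcongr
          _ = ∑ i ∈ insert a B, f i := (Finset.sum_insert haB).symm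
      · exact Finset.sdiff_subset_sdiff subset_rfl (Finset.subset_insert a B) hi

variable [DecidableEq ι] {g : Finset ι → ℝ} {c : ℝ}

lemma sqrt_mul_le_of_forall_card_le (hc : 0 ≤ c)
    (hunion : ∀ D E, Disjoint D E → g (D ∪ E) ≤ g D + g E)
    (hsmall : ∀ D ⊆ S, #D ≤ k → g D ≤ c * l2On D h)
    (hM : 0 ≤ M) (hSM : ∀ i ∈ S, |h i| ≤ M) :
    √k * g S ≤ c * (k * M + ∑ i ∈ S, |h i|) := by
  obtain rfl | hk := k.eq_zero_or_pos
  · simpa using mul_nonneg hc (Finset.sum_nonneg fun i _ ↦ abs_nonneg (h i))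
  induction S using Finset.strongInduction generalizing M with
  | H S ih =>
    obtain rfl | hS := S.eq_empty_or_nonempty
    · have hempty : g ∅ ≤ 0 := by simpa [l2On] using hsmall ∅ subset_rfl (by simp)
      exact (mul_nonpos_of_nonneg_of_nonpos (Real.sqrt_nonneg _) hempty).trans (by positivity)
    obtain ⟨B, hBS, hcard, M', hM', hM'B, htail⟩ :=
      exists_subset_card_eq_min_threshold (fun i ↦ abs_nonneg (h i)) S k
    have hB : B.Nonempty := Finset.card_pos.1 (hcard ▸ lt_min hk hS.card_pos)
    have hBk : #B ≤ k := hcard.trans_le (min_le_left _ _)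
    have head : √k * g B ≤ c * (k * M) :=
      calc √k * g B ≤ √k * (c * (√k * M)) := by
            gcongr
            exact (hsmall B hBS hBk).trans <|
              mul_le_mul_of_nonneg_left (l2On_le_sqrt_mul hBk hM fun i hi ↦ hSM i (hBS hi)) hc
        _ = c * (√k * √k * M) := by ring
        _ = c * (k * M) := by rw [Real.mul_self_sqrt k.cast_nonneg]
    have tail : √k * g (S \ B) ≤ c * (k * M' + ∑ i ∈ S \ B, |h i|) :=
      ih (S \ B) (Finset.sdiff_ssubset hBS hB)
        (fun D hD ↦ hsmall D (hD.trans Finset.sdiff_subset)) hM' htail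
    calc √k * g S = √k * g (B ∪ S \ B) := by rw [Finset.union_sdiff_of_subset hBS]
      _ ≤ √k * g B + √k * g (S \ B) := by
        rw [← mul_add]
        gcongr
        exact hunion _ _ Finset.disjoint_sdiff
      _ ≤ c * (k * M) + c * (∑ i ∈ B, |h i| + ∑ i ∈ S \ B, |h i|) :=
        add_le_add head (tail.trans (by gcongr))
      _ = c * (k * M + ∑ i ∈ S, |h i|) := by
        rw [← Finset.sum_sdiff hBS]
        ring

lemma exists_head_forall_sqrt_mul_tail_le (S : Finset ι) (h : ι → ℝ) (k : ℕ) :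
    ∃ B ⊆ S, #B ≤ k ∧ ∀ (g : Finset ι → ℝ) (c : ℝ), 0 ≤ c →
      (∀ D E, Disjoint D E → g (D ∪ E) ≤ g D + g E) →
      (∀ D ⊆ S \ B, #D ≤ k → g D ≤ c * l2On D h) →
      √k * g (S \ B) ≤ c * ∑ i ∈ S, |h i| := by
  obtain ⟨B, hBS, hcard, M, hM, hMB, htail⟩ :=
    exists_subset_card_eq_min_threshold (fun i ↦ abs_nonneg (h i)) S k
  refine ⟨B, hBS, hcard.trans_le (min_le_left _ _), fun g c hc hunion hsmall ↦ ?_⟩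
  calc √k * g (S \ B) ≤ c * (k * M + ∑ i ∈ S \ B, |h i|) :=
        sqrt_mul_le_of_forall_card_le hc hunion hsmall hM htail
    _ ≤ c * (∑ i ∈ B, |h i| + ∑ i ∈ S \ B, |h i|) := by gcongr
    _ = c * ∑ i ∈ S, |h i| := by rw [add_comm, Finset.sum_sdiff hBS]

end BlockDecomposition

variable {m n : Type*} [Fintype n] {H : Matrix m n ℝ} {k : ℕ} {δ ρ : ℝ}
  {h u v s x z : n → ℝ} {S T D : Finset n}

/-- The null space property of order `k` with constant `ρ`: a kernel vector carries on any `k`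
coordinates at most `ρ` times the `ℓ1`-mass it carries on the others. -/
def HasNullSpaceProperty [DecidableEq n] (H : Matrix m n ℝ) (k : ℕ) (ρ : ℝ) : Prop :=
  ∀ h : n → ℝ, H *ᵥ h = 0 → ∀ T : Finset n, #T ≤ k → ∑ i ∈ T, |h i| ≤ ρ * ∑ i ∈ Tᶜ, |h i|

lemma sum_compl_abs_sub_le [DecidableEq n] (hxs : ∑ i, |x i| ≤ ∑ i, |s i|) (T : Finset n) :
    ∑ i ∈ Tᶜ, |(x - s) i| ≤ ∑ i ∈ T, |(x - s) i| + 2 * ∑ i ∈ Tᶜ, |s i| := by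
  have on_T : ∑ i ∈ T, |s i| ≤ ∑ i ∈ T, |x i| + ∑ i ∈ T, |(x - s) i| := by
    rw [← Finset.sum_add_distrib]
    exact Finset.sum_le_sum fun i _ ↦ by
      simpa [abs_sub_comm] using sub_le_iff_le_add'.1 (abs_sub_abs_le_abs_sub (s i) (x i))
  have off_T : ∑ i ∈ Tᶜ, |(x - s) i| ≤ ∑ i ∈ Tᶜ, |x i| + ∑ i ∈ Tᶜ, |s i| := by
    rw [← Finset.sum_add_distrib]
    exact Finset.sum_le_sum fun i _ ↦ abs_sub (x i) (s i)
  rw [← Finset.sum_add_sum_compl T fun i ↦ |x i|, ← Finset.sum_add_sum_compl T fun i ↦ |s i|] at hxs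
  linarith

lemma HasNullSpaceProperty.sum_abs_sub_le [DecidableEq n] (hH : HasNullSpaceProperty H k ρ)
    (hρ0 : 0 ≤ ρ) (hρ1 : ρ < 1) (hx : H *ᵥ x = H *ᵥ s) (hxs : ∑ i, |x i| ≤ ∑ i, |s i|)
    (hz : #{i | z i ≠ 0} ≤ k) :
    ∑ i, |(x - s) i| ≤ 2 * (1 + ρ) / (1 - ρ) * ∑ i, |(s - z) i| := by
  set T : Finset n := {i | z i ≠ 0} with hT
  have hnull : ∑ i ∈ T, |(x - s) i| ≤ ρ * ∑ i ∈ Tᶜ, |(x - s) i| :=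
    hH (x - s) (by rw [mulVec_sub, hx, sub_self]) T hz
  have hcone := sum_compl_abs_sub_le hxs T
  have herror : ∑ i ∈ Tᶜ, |s i| ≤ ∑ i, |(s - z) i| :=
    calc ∑ i ∈ Tᶜ, |s i| = ∑ i ∈ Tᶜ, |(s - z) i| := Finset.sum_congr rfl fun i hi ↦ by
          have hzi : z i = 0 := by simpa [hT] using hi
          simp [hzi]
      _ ≤ ∑ i, |(s - z) i| :=
        Finset.sum_le_univ_sum_of_nonneg fun i ↦ abs_nonneg _
  rw [← Finset.sum_add_sum_compl T, div_mul_eq_mul_div, le_div_iff₀ (sub_pos.2 hρ1)]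
  linear_combination 2 * hnull + (1 + ρ) * hcone + 2 * (1 + ρ) * herror

lemma indicator_dotProduct_indicator_self (S : Finset n) (h : n → ℝ) :
    (S : Set n).indicator h ⬝ᵥ (S : Set n).indicator h = l2On S h ^ 2 := by
  classical
  rw [sq_l2On]
  simp [dotProduct, Set.indicator_apply, sq]

lemma indicator_dotProduct_indicator_of_disjoint (hST : Disjoint S T) (h : n → ℝ) :
    (S : Set n).indicator h ⬝ᵥ (T : Set n).indicator h = 0 := by
  refine Finset.sum_eq_zero fun i _ ↦ ?_
  by_cases hi : i ∈ S
  · simp [Finset.disjoint_left.1 hST hi]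
  · simp [hi]

lemma mulVec_indicator_union [DecidableEq n] (H : Matrix m n ℝ) (hST : Disjoint S T) (h : n → ℝ) :
    H *ᵥ ((S ∪ T : Finset n) : Set n).indicator h =
      H *ᵥ (S : Set n).indicator h + H *ᵥ (T : Set n).indicator h := by
  rw [Finset.coe_union, Set.indicator_union_of_disjoint (Finset.disjoint_coe.2 hST), ← mulVec_add]
  rfl

variable [Fintype m]

/-- `HasRIP H k δ` is the restricted isometry property of order `k` with constant `δ`, with `x ⬝ᵥ x`
in the role of `‖x‖₂²`. -/
def HasRIP (H : Matrix m n ℝ) (k : ℕ) (δ : ℝ) : Prop :=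
  ∀ x : n → ℝ, #{i | x i ≠ 0} ≤ k →
    (1 - δ) * (x ⬝ᵥ x) ≤ (H *ᵥ x) ⬝ᵥ (H *ᵥ x) ∧ (H *ᵥ x) ⬝ᵥ (H *ᵥ x) ≤ (1 + δ) * (x ⬝ᵥ x)

namespace HasRIP

lemma bounds_of_eq_zero_off (hH : HasRIP H k δ) (hS : #S ≤ k) (hx : ∀ i ∉ S, x i = 0) :
    (1 - δ) * (x ⬝ᵥ x) ≤ (H *ᵥ x) ⬝ᵥ (H *ᵥ x) ∧ (H *ᵥ x) ⬝ᵥ (H *ᵥ x) ≤ (1 + δ) * (x ⬝ᵥ x) := by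
  refine hH x ((Finset.card_le_card fun i hi ↦ ?_).trans hS)
  exact not_imp_comm.1 (hx i) (Finset.mem_filter.1 hi).2

lemma sq_dotProduct_mulVec_le (hH : HasRIP H k δ) (hS : #S ≤ k) (hu : ∀ i ∉ S, u i = 0)
    (hv : ∀ i ∉ S, v i = 0) (huv : u ⬝ᵥ v = 0) :
    ((H *ᵥ u) ⬝ᵥ (H *ᵥ v)) ^ 2 ≤ δ ^ 2 * (u ⬝ᵥ u) * (v ⬝ᵥ v) := by
  have polarization (t : ℝ) :
      0 ≤ δ * (u ⬝ᵥ u) * (t * t) + -2 * ((H *ᵥ u) ⬝ᵥ (H *ᵥ v)) * t + δ * (v ⬝ᵥ v) := by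
    have upper := (hH.bounds_of_eq_zero_off (x := t • u + v) hS
      fun i hi ↦ by simp [hu i hi, hv i hi]).2
    have lower := (hH.bounds_of_eq_zero_off (x := t • u - v) hS
      fun i hi ↦ by simp [hu i hi, hv i hi]).1
    simp only [mulVec_add, mulVec_sub, mulVec_smul, add_dotProduct, dotProduct_add, sub_dotProduct,
      dotProduct_sub, smul_dotProduct, dotProduct_smul, smul_eq_mul, dotProduct_comm v u, huv,
      dotProduct_comm (H *ᵥ v) (H *ᵥ u)] at upper lower
    linarith
  have := discrim_le_zero polarization
  rw [discrim] at this
  linarith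

lemma abs_dotProduct_mulVec_indicator_le (hH : HasRIP H k δ) (hδ : 0 ≤ δ) (hST : Disjoint S T)
    (hcard : #S + #T ≤ k) (h : n → ℝ) :
    |(H *ᵥ (S : Set n).indicator h) ⬝ᵥ (H *ᵥ (T : Set n).indicator h)| ≤
      δ * l2On S h * l2On T h := by
  classical
  have hsq := hH.sq_dotProduct_mulVec_le ((Finset.card_union_le S T).trans hcard)
    (u := (S : Set n).indicator h) (v := (T : Set n).indicator h)
    (fun i hi ↦ by simp_all) (fun i hi ↦ by simp_all)
    (indicator_dotProduct_indicator_of_disjoint hST h)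
  refine abs_le_of_sq_le_sq ?_ (mul_nonneg (mul_nonneg hδ (l2On_nonneg S h)) (l2On_nonneg T h))
  simpa only [indicator_dotProduct_indicator_self, mul_pow] using hsq

variable [DecidableEq n]

lemma abs_dotProduct_mulVec_indicator_union_le (hH : HasRIP H (2 * k) δ) (hδ : 0 ≤ δ)
    (hS : #S ≤ k) (hT : #T ≤ k) (hD : #D ≤ k) (hST : Disjoint S T) (hSTD : Disjoint (S ∪ T) D)
    (h : n → ℝ) :
    |(H *ᵥ ((S ∪ T : Finset n) : Set n).indicator h) ⬝ᵥ (H *ᵥ (D : Set n).indicator h)| ≤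
      √2 * δ * l2On (S ∪ T) h * l2On D h := by
  obtain ⟨hSD, hTD⟩ := Finset.disjoint_union_left.1 hSTD
  rw [mulVec_indicator_union H hST, add_dotProduct]
  calc _ ≤ δ * l2On S h * l2On D h + δ * l2On T h * l2On D h :=
        (abs_add_le _ _).trans <| add_le_add
          (hH.abs_dotProduct_mulVec_indicator_le hδ hSD (by omega) h)
          (hH.abs_dotProduct_mulVec_indicator_le hδ hTD (by omega) h)
    _ = δ * (l2On S h + l2On T h) * l2On D h := by ring
    _ ≤ δ * (√2 * l2On (S ∪ T) h) * l2On D h := by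
      gcongr
      · exact l2On_nonneg D h
      · exact l2On_add_l2On_le hST
    _ = √2 * δ * l2On (S ∪ T) h * l2On D h := by ring

lemma one_sub_mul_sq_l2On_le (hH : HasRIP H k δ) (hS : #S ≤ k) (hh : H *ᵥ h = 0) :
    (1 - δ) * l2On S h ^ 2 ≤
      |(H *ᵥ (S : Set n).indicator h) ⬝ᵥ (H *ᵥ ((Sᶜ : Finset n) : Set n).indicator h)| := by
  have himage : H *ᵥ ((Sᶜ : Finset n) : Set n).indicator h = -(H *ᵥ (S : Set n).indicator h) := by
    rw [Finset.coe_compl, eq_neg_iff_add_eq_zero, ← mulVec_add, Set.indicator_compl_add_self, hh]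
  rw [himage, dotProduct_neg, abs_neg, ← indicator_dotProduct_indicator_self]
  exact (hH.bounds_of_eq_zero_off hS fun i hi ↦ by simp [hi]).1.trans (le_abs_self _)

lemma sqrt_mul_l2On_le (hH : HasRIP H (2 * k) δ) (hδ0 : 0 ≤ δ) (hδ1 : δ ≤ 1) (hh : H *ᵥ h = 0)
    (hT : #T ≤ k) : (1 - δ) * (√k * l2On T h) ≤ √2 * δ * ∑ i ∈ Tᶜ, |h i| := by
  obtain ⟨B, hBT, hB, htail⟩ := exists_head_forall_sqrt_mul_tail_le Tᶜ h k
  have hTB : Disjoint T B := disjoint_compl_right.mono_right hBT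
  have hcompl : Tᶜ \ B = (T ∪ B)ᶜ := by rw [Finset.compl_union, Finset.sdiff_eq_inter_compl]
  let g (D : Finset n) : ℝ :=
    |(H *ᵥ ((T ∪ B : Finset n) : Set n).indicator h) ⬝ᵥ (H *ᵥ (D : Set n).indicator h)|
  have hunion (D E : Finset n) (hDE : Disjoint D E) : g (D ∪ E) ≤ g D + g E := by
    simp only [g, mulVec_indicator_union H hDE, dotProduct_add]
    exact abs_add_le _ _
  have hcross : √k * g (T ∪ B)ᶜ ≤ √2 * δ * l2On (T ∪ B) h * ∑ i ∈ Tᶜ, |h i| := by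
    rw [← hcompl]
    refine htail g _ (mul_nonneg (by positivity) (l2On_nonneg _ h)) hunion fun D hD hDk ↦ ?_
    exact hH.abs_dotProduct_mulVec_indicator_union_le hδ0 hT hB hDk hTB
      (disjoint_compl_right.mono_right (hD.trans_eq hcompl)) h
  have henergy : (1 - δ) * l2On (T ∪ B) h ^ 2 ≤ g (T ∪ B)ᶜ :=
    hH.one_sub_mul_sq_l2On_le ((Finset.card_union_le T B).trans (by omega)) hh
  have hmono : √k * l2On T h ≤ √k * l2On (T ∪ B) h :=
    mul_le_mul_of_nonneg_left (l2On_mono Finset.subset_union_left) (Real.sqrt_nonneg _)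
  refine (mul_le_mul_of_nonneg_left hmono (sub_nonneg.2 hδ1)).trans ?_
  obtain hzero | hpos := (l2On_nonneg (T ∪ B) h).eq_or_lt
  · rw [← hzero, mul_zero, mul_zero]
    positivity
  refine le_of_mul_le_mul_right ?_ hpos
  calc (1 - δ) * (√k * l2On (T ∪ B) h) * l2On (T ∪ B) h
      = √k * ((1 - δ) * l2On (T ∪ B) h ^ 2) := by ring
    _ ≤ √k * g (T ∪ B)ᶜ := by gcongr
    _ ≤ √2 * δ * l2On (T ∪ B) h * ∑ i ∈ Tᶜ, |h i| := hcross
    _ = √2 * δ * (∑ i ∈ Tᶜ, |h i|) * l2On (T ∪ B) h := by ring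

end HasRIP

lemma HasRIP.hasNullSpaceProperty [DecidableEq n] (hH : HasRIP H (2 * k) δ) (hδ0 : 0 ≤ δ)
    (hδ1 : δ < 1) : HasNullSpaceProperty H k (√2 * δ / (1 - δ)) := by
  intro h hh T hT
  have hpos : 0 < 1 - δ := sub_pos.2 hδ1
  rw [div_mul_eq_mul_div, le_div_iff₀' hpos]
  calc (1 - δ) * ∑ i ∈ T, |h i| ≤ (1 - δ) * (√k * l2On T h) := by
        gcongr
        exact sum_abs_le_sqrt_mul_l2On hT
    _ ≤ √2 * δ * ∑ i ∈ Tᶜ, |h i| := hH.sqrt_mul_l2On_le hδ0 hδ1.le hh hT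

lemma sqrt_two_mul_div_one_sub_lt_one (hδ : δ < √2 - 1) : √2 * δ / (1 - δ) < 1 := by
  have hsqrt : √2 * √2 = (2 : ℝ) := Real.mul_self_sqrt zero_le_two
  have hpos : 0 < 1 - δ := by nlinarith [Real.sqrt_nonneg 2]
  rw [div_lt_one hpos]
  nlinarith [Real.sqrt_nonneg 2]

/-- Candès' recovery constant `2 (1 + ρ) / (1 - ρ)`, where `ρ = √2 δ / (1 - δ)` is the null space
constant of a matrix with RIP constant `δ`. -/
noncomputable def ripRecoveryConst (δ : ℝ) : ℝ :=
  2 * (1 + √2 * δ / (1 - δ)) / (1 - √2 * δ / (1 - δ))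

lemma ripRecoveryConst_pos (hδ0 : 0 ≤ δ) (hδ : δ < √2 - 1) : 0 < ripRecoveryConst δ := by
  have hδ1 : 0 ≤ 1 - δ := by linarith [Real.sqrt_two_lt_three_halves]
  exact div_pos (by positivity) (sub_pos.2 (sqrt_two_mul_div_one_sub_lt_one hδ))

theorem rip_l1_stable_recovery_general (hδ0 : 0 ≤ δ) (hδ : δ < √2 - 1) (hH : HasRIP H (2 * k) δ)
    (hx : H *ᵥ x = H *ᵥ s) (hxs : ∑ i, |x i| ≤ ∑ i, |s i|) (hz : #{i | z i ≠ 0} ≤ k) :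
    ∑ i, |(x - s) i| ≤ ripRecoveryConst δ * ∑ i, |(s - z) i| ∧
      (#{i | s i ≠ 0} ≤ k → x = s) := by
  classical
  have hδ1 : δ < 1 := by linarith [Real.sqrt_two_lt_three_halves]
  have hρ0 : 0 ≤ √2 * δ / (1 - δ) := div_nonneg (by positivity) (sub_nonneg.2 hδ1.le)
  have bound {w : n → ℝ} (hw : #{i | w i ≠ 0} ≤ k) :
      ∑ i, |(x - s) i| ≤ ripRecoveryConst δ * ∑ i, |(s - w) i| :=
    (hH.hasNullSpaceProperty hδ0 hδ1).sum_abs_sub_le hρ0 (sqrt_two_mul_div_one_sub_lt_one hδ)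
      hx hxs hw
  refine ⟨bound hz, fun hs ↦ sub_eq_zero.1 (funext fun i ↦ abs_nonpos_iff.1 ?_)⟩
  calc |(x - s) i| ≤ ∑ i, |(x - s) i| :=
        Finset.single_le_sum (fun j _ ↦ abs_nonneg ((x - s) j)) (Finset.mem_univ i)
    _ ≤ 0 := by simpa using bound hs

end

/-- For every `δ < √2 − 1` there is a constant `C₀ > 0` depending only on `δ` such
that for every matrix `H` satisfying the RIP of order `2k` with constant `δ`,
every `s`, and every ℓ1-minimizer `s*` over `{x : H x = H s}`, one has
`‖s* − s‖₁ ≤ C₀ ‖s − s_k‖₁` where `s_k` is a best `k`-term approximation of `s`;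
in particular, if `s` is `k`-sparse, then `s* = s`. -/
theorem rip_l1_stable_recovery
    (δ : ℝ) (hδ0 : 0 ≤ δ) (hδ : δ < Real.sqrt 2 - 1) :
    ∃ C₀ : ℝ, 0 < C₀ ∧
      ∀ (m n k : ℕ), 1 ≤ k →
        ∀ H : Matrix (Fin m) (Fin n) ℝ,
          (∀ x : Fin n → ℝ, l0 x ≤ 2 * k →
            (1 - δ) * (x ⬝ᵥ x) ≤ (H.mulVec x) ⬝ᵥ (H.mulVec x) ∧
            (H.mulVec x) ⬝ᵥ (H.mulVec x) ≤ (1 + δ) * (x ⬝ᵥ x)) →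
          ∀ s sStar sk : Fin n → ℝ,
            H.mulVec sStar = H.mulVec s →
            (∀ x : Fin n → ℝ, H.mulVec x = H.mulVec s → l1 sStar ≤ l1 x) →
            (l0 sk ≤ k ∧ ∀ x : Fin n → ℝ, l0 x ≤ k → l1 (s - sk) ≤ l1 (s - x)) →
            l1 (sStar - s) ≤ C₀ * l1 (s - sk) ∧ (l0 s ≤ k → sStar = s) :=
  ⟨ripRecoveryConst δ, ripRecoveryConst_pos hδ0 hδ, fun _ _ _ _ _ hH _ _ _ hx hmin hsk ↦
    rip_l1_stable_recovery_general hδ0 hδ hH hx (hmin _ rfl) hsk.1⟩
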